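/- Let f : {1,…,b} → {1,…,k}, α ∈ ℝ^b, C ∈ ℝ^{k×n}, B ∈ ℝ^{b×m}, and define Ã ∈ ℝ^{b×n} by Ã_i = α_i · C_{f(i)}. Define B̃ ∈ ℝ^{k×m} by B̃_j = Σ_{i : f(i)=j} α_i B_i. Then Ãᵀ B = Cᵀ B̃. -/

import Mathlib

open Matrix

theorem pamm_contraction_identity {b k n m : ℕ}
    (f : Fin b → Fin k) (α : Fin b → ℝ)
    (C : Matrix (Fin k) (Fin n) ℝ) (B : Matrix (Fin b) (Fin m) ℝ)
    (Atil : Matrix (Fin b) (Fin n) ℝ)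
    (hAtil : ∀ i, Atil i = α i • C (f i))
    (Btil : Matrix (Fin k) (Fin m) ℝ)
    (hBtil : ∀ j, Btil j = ∑ i ∈ Finset.univ.filter (fun i => f i = j), α i • B i) :
    Atilᵀ * B = Cᵀ * Btil := by
  ext p q
  have hB : ∀ j, Btil j q = ∑ i ∈ Finset.univ.filter (fun i => f i = j), α i * B i q := by
    intro j
    rw [hBtil j, Finset.sum_apply]
    simp only [Pi.smul_apply, smul_eq_mul]
  simp only [Matrix.mul_apply, Matrix.transpose_apply, hAtil, hB, Pi.smul_apply, smul_eq_mul,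
    Finset.mul_sum]
  -- Group the indices `i` by their assigned row `f i`; on the fibre over `j`, `C (f i) = C j`.
  rw [← Finset.sum_fiberwise Finset.univ f]
  refine Finset.sum_congr rfl fun j _ => Finset.sum_congr rfl fun i hi => ?_
  rw [(Finset.mem_filter.mp hi).2]
  ring
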